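/- The only Courant sharp eigenvalues of the 2D isotropic quantum harmonic oscillator are 2, 4 and 6. Precisely: (a) for every ℓ ≥ 3 and every nonzero u ∈ E_ℓ, the number of nodal domains satisfies μ(u) < ℓ(ℓ+1)/2 + 1 (strict inequality); (b) for each ℓ ∈ {0,1,2} there exists a nonzero u ∈ E_ℓ whose number of nodal domains equals ℓ(ℓ+1)/2 + 1 (namely 1, 2 and 4 respectively). -/

import Mathlib

/-- The physicist's Hermite polynomials: `H 0 = 1`, `H 1 = 2X`,
`H (n+2) = 2X · H (n+1) - 2(n+1) · H n`. -/
noncomputable def H : ℕ → Polynomial ℝ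
  | 0 => 1
  | 1 => Polynomial.C 2 * Polynomial.X
  | n + 2 => Polynomial.C 2 * Polynomial.X * H (n + 1) - Polynomial.C (2 * (n + 1) : ℝ) * H n

/-- The basis eigenfunctions `φ_{m,n}(x,y) = H_m(x) H_n(y) e^{-(x²+y²)/2}` of the 2D
isotropic quantum harmonic oscillator. -/
noncomputable def phi (m n : ℕ) : ℝ × ℝ → ℝ := fun p =>
  (H m).eval p.1 * (H n).eval p.2 * Real.exp (-(p.1 ^ 2 + p.2 ^ 2) / 2)

/-- The eigenspace `E_ℓ` associated with the eigenvalue `2(ℓ+1)`: the real span of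
`φ_{ℓ-j,j}`, `0 ≤ j ≤ ℓ`. -/
noncomputable def eigenspace (ℓ : ℕ) : Submodule ℝ (ℝ × ℝ → ℝ) :=
  Submodule.span ℝ {f : ℝ × ℝ → ℝ | ∃ j : ℕ, j ≤ ℓ ∧ f = phi (ℓ - j) j}

/-- The number `μ(u)` of nodal domains of `u`: the number of connected components of
`{p : u p ≠ 0}`. -/
noncomputable def mu (u : ℝ × ℝ → ℝ) : ℕ :=
  {C : Set (ℝ × ℝ) | ∃ p : ℝ × ℝ, u p ≠ 0 ∧
    C = connectedComponentIn {q : ℝ × ℝ | u q ≠ 0} p}.ncard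


open MeasureTheory ProbabilityTheory Filter Topology

namespace CS

/-! ### Hermite polynomials -/

lemma H_deriv (n : ℕ) : Polynomial.derivative (H (n + 1)) = Polynomial.C (2 * (n + 1) : ℝ) * H n := by
  induction n using Nat.strong_induction_on with
  | _ n ih =>
    match n with
    | 0 => simp [H]
    | 1 =>
      have h1 := ih 0 (by norm_num)
      simp only [H, Polynomial.derivative_sub, Polynomial.derivative_mul, Polynomial.derivative_C,
        Polynomial.derivative_X, Polynomial.derivative_one]
      simp only [map_mul, map_add, Polynomial.C_1, map_ofNat, Nat.cast_zero, Nat.cast_one, map_zero]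
      ring
    | n + 2 =>
      have h1 := ih (n + 1) (by omega)
      have h2 := ih n (by omega)
      rw [H, Polynomial.derivative_sub, Polynomial.derivative_mul, Polynomial.derivative_mul,
        Polynomial.derivative_mul, h1, h2]
      simp only [Polynomial.derivative_C, Polynomial.derivative_X]
      have h3 : H (n + 2) = Polynomial.C 2 * Polynomial.X * H (n + 1)
        - Polynomial.C (2 * (n + 1) : ℝ) * H n := by rw [H]
      rw [h3]
      push_cast
      simp only [map_mul, map_add, Polynomial.C_1, map_ofNat, Nat.cast_zero, Nat.cast_one, map_zero]
      ring

lemma H_parity (n : ℕ) (x : ℝ) : (H n).eval (-x) = (-1) ^ n * (H n).eval x := by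
  induction n using Nat.strong_induction_on with
  | _ n ih =>
    match n with
    | 0 => simp [H]
    | 1 => simp [H]
    | n + 2 =>
      simp only [H, Polynomial.eval_sub, Polynomial.eval_mul, Polynomial.eval_C,
        Polynomial.eval_X, ih (n + 1) (by omega), ih n (by omega)]
      ring

lemma H_span : Submodule.span ℝ (Set.range H) = ⊤ := by
  have hX : ∀ p ∈ Submodule.span ℝ (Set.range H), Polynomial.X * p ∈ Submodule.span ℝ (Set.range H) := by
    intro p hp
    induction hp using Submodule.span_induction with
    | mem p hp =>
      obtain ⟨n, rfl⟩ := hp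
      have hm : ∀ k, H k ∈ Submodule.span ℝ (Set.range H) := fun k => Submodule.subset_span ⟨k, rfl⟩
      rcases n with _ | n
      · have : Polynomial.X * H 0 = (1 / 2 : ℝ) • H 1 := by
          simp only [H, mul_one, Polynomial.smul_eq_C_mul]
          rw [← mul_assoc, ← Polynomial.C_mul]; norm_num
        rw [this]; exact Submodule.smul_mem _ _ (hm 1)
      · have : Polynomial.X * H (n + 1) = (1 / 2 : ℝ) • H (n + 2) + ((n + 1 : ℝ)) • H n := by
          rw [H]
          simp only [Polynomial.smul_eq_C_mul, mul_sub, ← mul_assoc, ← Polynomial.C_mul]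
          norm_num
        rw [this]; exact Submodule.add_mem _ (Submodule.smul_mem _ _ (hm _)) (Submodule.smul_mem _ _ (hm _))
    | zero => simp
    | add p q _ _ h1 h2 => rw [mul_add]; exact Submodule.add_mem _ h1 h2
    | smul a p _ h => rw [mul_smul_comm]; exact Submodule.smul_mem _ _ h
  rw [eq_top_iff]
  rintro p -
  induction p using Polynomial.induction_on' with
  | add p q h1 h2 => exact Submodule.add_mem _ h1 h2
  | monomial n a =>
    rw [← mul_one a, ← smul_eq_mul, ← Polynomial.smul_monomial]
    refine Submodule.smul_mem _ _ ?_
    induction n with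
    | zero => exact Submodule.subset_span ⟨0, by simp [H]⟩
    | succ n ih =>
      have := hX _ ih
      rwa [Polynomial.X_mul_monomial] at this

/-! ### Gaussian measure -/

noncomputable def g1 : Measure ℝ := gaussianReal 0 (1 / 2)
noncomputable def gg : Measure (ℝ × ℝ) := g1.prod g1

instance : IsGaussian g1 := by unfold g1; infer_instance
instance : IsGaussian gg := by unfold gg; infer_instance

lemma gauss_exp {E : Type*} [NormedAddCommGroup E] [NormedSpace ℝ E] [MeasurableSpace E] [BorelSpace E]
    [SecondCountableTopology E] [CompleteSpace E] (μ : Measure E) [IsGaussian μ] (B : ℝ) :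
    Integrable (fun x => Real.exp (B * ‖x‖)) μ := by
  obtain ⟨C, hC, hi⟩ := IsGaussian.exists_integrable_exp_sq μ
  refine (hi.const_mul (Real.exp (B ^ 2 / (4 * C)))).mono' (by fun_prop) (ae_of_all _ fun x => ?_)
  rw [Real.norm_eq_abs, Real.abs_exp, ← Real.exp_add, Real.exp_le_exp]
  have : B ^ 2 / (4 * C) + C * ‖x‖ ^ 2 - B * ‖x‖ = C * (‖x‖ - B / (2 * C)) ^ 2 := by
    field_simp; ring
  nlinarith [mul_nonneg hC.le (sq_nonneg (‖x‖ - B / (2 * C)))]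

lemma poly_exp (p : Polynomial ℝ) : ∃ A B : ℝ, 0 ≤ A ∧ 0 ≤ B ∧ ∀ x, |p.eval x| ≤ A * Real.exp (B * |x|) := by
  induction p using Polynomial.induction_on' with
  | add p q h1 h2 =>
    obtain ⟨A, B, hA, hB, h⟩ := h1
    obtain ⟨A', B', hA', hB', h'⟩ := h2
    refine ⟨A + A', B + B', by positivity, by positivity, fun x => ?_⟩
    rw [Polynomial.eval_add, add_mul]
    refine (abs_add_le _ _).trans (add_le_add ((h x).trans ?_) ((h' x).trans ?_))
    · gcongr; linarith
    · gcongr; linarith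
  | monomial n a =>
    refine ⟨|a|, n, abs_nonneg _, by positivity, fun x => ?_⟩
    rw [Polynomial.eval_monomial, abs_mul, abs_pow, Real.exp_nat_mul]
    gcongr
    linarith [Real.add_one_le_exp |x|]

lemma poly_int (p : Polynomial ℝ) : Integrable (fun x => p.eval x) g1 := by
  obtain ⟨A, B, hA, hB, h⟩ := poly_exp p
  exact ((gauss_exp g1 B).const_mul A).mono' (by fun_prop) (ae_of_all _ fun x => h x)

lemma g1_integral (f : ℝ → ℝ) : ∫ x, f x ∂g1 = ∫ x, (Real.sqrt Real.pi)⁻¹ * Real.exp (-x ^ 2) * f x := by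
  unfold g1
  rw [integral_gaussianReal_eq_integral_smul (by norm_num)]
  congr 1; ext x
  simp only [gaussianPDFReal, smul_eq_mul]
  have h2 : Real.sqrt (2 * Real.pi * ((1 / 2 : NNReal) : ℝ)) = Real.sqrt Real.pi := by
    congr 1; push_cast; ring
  rw [h2]
  congr 3
  push_cast; ring

lemma g1_integrable (f : ℝ → ℝ) (hf : Integrable f g1) :
    Integrable (fun x => Real.exp (-x ^ 2) * f x) := by
  unfold g1 at hf
  rw [gaussianReal_of_var_ne_zero _ (by norm_num), integrable_withDensity_iff_integrable_smul'
    (measurable_gaussianPDF _ _) (by simp [gaussianPDF])] at hf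
  refine (hf.const_mul (Real.sqrt Real.pi)).congr (ae_of_all _ fun x => ?_)
  simp only [gaussianPDF, smul_eq_mul, gaussianPDFReal]
  rw [ENNReal.toReal_ofReal (by positivity)]
  have : Real.sqrt Real.pi ≠ 0 := by positivity
  norm_num
  field_simp

lemma stein (p : Polynomial ℝ) : ∫ z, 2 * z * p.eval z ∂g1 = ∫ z, p.derivative.eval z ∂g1 := by
  have key := integral_mul_deriv_eq_deriv_mul_of_integrable (u := fun x => p.eval x)
    (u' := fun x => p.derivative.eval x)
    (v := fun x => Real.exp (-x ^ 2)) (v' := fun x => Real.exp (-x ^ 2) * (-(2 * x)))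
    (fun x _ => p.hasDerivAt x) (fun x _ => by
      have := ((hasDerivAt_pow 2 x).neg).exp
      simpa using this) ?_ ?_ ?_
  · rw [g1_integral, g1_integral]
    simp_rw [mul_assoc]
    rw [integral_const_mul, integral_const_mul]
    congr 1
    calc _ = -∫ x, p.eval x * (Real.exp (-x ^ 2) * (-(2 * x))) := by
          rw [← integral_neg]; congr 1; ext x; ring
      _ = _ := by rw [key, neg_neg]; congr 1; ext x; ring
  · have := g1_integrable _ (poly_int (-(Polynomial.C 2 * Polynomial.X * p)))
    refine this.congr (ae_of_all _ fun x => ?_)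
    simp; ring
  · refine (g1_integrable _ (poly_int p.derivative)).congr (ae_of_all _ fun x => ?_)
    simp; ring
  · refine (g1_integrable _ (poly_int p)).congr (ae_of_all _ fun x => ?_)
    simp; ring

lemma hermite_ou (c s : ℝ) (hcs : c ^ 2 + s ^ 2 = 1) (n : ℕ) (x : ℝ) :
    ∫ z, (H n).eval (c * x + s * z) ∂g1 = c ^ n * (H n).eval x := by
  have hp : ∀ (p : Polynomial ℝ) z, p.eval (c * x + s * z)
      = (p.comp (Polynomial.C (c * x) + Polynomial.C s * Polynomial.X)).eval z := by
    intro p z; simp [Polynomial.eval_comp]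
  have hint : ∀ (p : Polynomial ℝ), Integrable (fun z => p.eval (c * x + s * z)) g1 := by
    intro p; simp_rw [hp]; exact poly_int _
  have hzint : ∀ (p : Polynomial ℝ), Integrable (fun z => 2 * z * p.eval (c * x + s * z)) g1 := by
    intro p; simp_rw [hp]
    have := poly_int (Polynomial.C 2 * Polynomial.X * (p.comp (Polynomial.C (c * x) + Polynomial.C s * Polynomial.X)))
    simpa using this
  have hst : ∀ (p : Polynomial ℝ), ∫ z, 2 * z * p.eval (c * x + s * z) ∂g1
      = s * ∫ z, p.derivative.eval (c * x + s * z) ∂g1 := by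
    intro p; simp_rw [hp]; rw [stein, ← integral_const_mul]
    congr 1; ext z
    simp [Polynomial.derivative_comp]
  induction n using Nat.strong_induction_on with
  | _ n ih =>
    match n with
    | 0 => simp [H]
    | 1 =>
      have e : ∀ z, (H 1).eval (c * x + s * z) = 2 * c * x + s * (2 * z * (1 : Polynomial ℝ).eval (c * x + s * z)) := by
        intro z; simp [H]; ring
      simp_rw [e]
      rw [integral_add (integrable_const _) ((hzint 1).const_mul s), integral_const_mul s, hst]
      simp [H]; ring
    | n + 2 =>
      have e : ∀ z, (H (n + 2)).eval (c * x + s * z) = 2 * c * x * (H (n + 1)).eval (c * x + s * z)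
          + s * (2 * z * (H (n + 1)).eval (c * x + s * z))
          - 2 * (n + 1) * (H n).eval (c * x + s * z) := by
        intro z; simp [H]; ring
      have e2 : (H (n + 2)).eval x = 2 * x * (H (n + 1)).eval x - 2 * (n + 1) * (H n).eval x := by
        simp [H]
      simp_rw [e]
      have i12 : Integrable (fun z => 2 * c * x * (H (n + 1)).eval (c * x + s * z)
          + s * (2 * z * (H (n + 1)).eval (c * x + s * z))) g1 :=
        ((hint _).const_mul _).add ((hzint _).const_mul _)
      rw [integral_sub i12 ((hint _).const_mul _),
        integral_add ((hint _).const_mul _) ((hzint _).const_mul _),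
        integral_const_mul, integral_const_mul, integral_const_mul, hst, H_deriv]
      simp only [Polynomial.eval_mul, Polynomial.eval_C]
      rw [integral_const_mul, ih (n + 1) (by omega), ih n (by omega), e2]
      linear_combination (2 * (n + 1) * c ^ n * (H n).eval x) * hcs

noncomputable def h (a b : ℕ) : ℝ × ℝ → ℝ := fun p => (H a).eval p.1 * (H b).eval p.2

/-- exponential growth, exponentially weighted Lipschitz -/
def EL (f : ℝ × ℝ → ℝ) : Prop := ∃ A B : ℝ, 0 ≤ A ∧ 0 ≤ B ∧
  (∀ x, |f x| ≤ A * Real.exp (B * ‖x‖)) ∧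
  ∀ x y, |f x - f y| ≤ A * Real.exp (B * (‖x‖ + ‖y‖)) * ‖x - y‖

lemma EL.const (c : ℝ) : EL (fun _ => c) :=
  ⟨|c|, 0, abs_nonneg _, le_rfl, by simp, fun x y => by simp; positivity⟩

lemma EL.fst : EL Prod.fst := by
  refine ⟨1, 1, by norm_num, by norm_num, fun x => ?_, fun x y => ?_⟩
  · have := norm_fst_le x
    rw [Real.norm_eq_abs] at this
    linarith [Real.add_one_le_exp (1 * ‖x‖)]
  · have := norm_fst_le (x - y)
    rw [Real.norm_eq_abs] at this
    rw [one_mul, one_mul]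
    have h2 : 1 ≤ Real.exp (‖x‖ + ‖y‖) := Real.one_le_exp (by positivity)
    rw [Prod.fst_sub] at this
    nlinarith [norm_nonneg (x - y), this]

lemma EL.snd : EL Prod.snd := by
  refine ⟨1, 1, by norm_num, by norm_num, fun x => ?_, fun x y => ?_⟩
  · have := norm_snd_le x
    rw [Real.norm_eq_abs] at this
    linarith [Real.add_one_le_exp (1 * ‖x‖)]
  · have := norm_snd_le (x - y)
    rw [Real.norm_eq_abs] at this
    rw [one_mul, one_mul]
    have h2 : 1 ≤ Real.exp (‖x‖ + ‖y‖) := Real.one_le_exp (by positivity)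
    rw [Prod.snd_sub] at this
    nlinarith [norm_nonneg (x - y), this]

lemma EL.add {f g : ℝ × ℝ → ℝ} (hf : EL f) (hg : EL g) : EL (fun x => f x + g x) := by
  obtain ⟨A, B, hA, hB, h1, h2⟩ := hf
  obtain ⟨A', B', hA', hB', h1', h2'⟩ := hg
  refine ⟨A + A', B + B', by positivity, by positivity, fun x => ?_, fun x y => ?_⟩
  · rw [add_mul]
    refine (abs_add_le _ _).trans (add_le_add ((h1 x).trans ?_) ((h1' x).trans ?_)) <;>
    · gcongr; linarith
  · rw [add_mul, add_mul, add_sub_add_comm]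
    refine (abs_add_le _ _).trans (add_le_add ((h2 x y).trans ?_) ((h2' x y).trans ?_)) <;>
    · gcongr; linarith

lemma EL.mul {f g : ℝ × ℝ → ℝ} (hf : EL f) (hg : EL g) : EL (fun x => f x * g x) := by
  obtain ⟨A, B, hA, hB, h1, h2⟩ := hf
  obtain ⟨A', B', hA', hB', h1', h2'⟩ := hg
  refine ⟨2 * (A * A'), B + B', by positivity, by positivity, fun x => ?_, fun x y => ?_⟩
  · rw [abs_mul, add_mul, Real.exp_add]
    have := mul_le_mul (h1 x) (h1' x) (abs_nonneg _) (by positivity)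
    have h3 : 0 ≤ A * A' * (Real.exp (B * ‖x‖) * Real.exp (B' * ‖x‖)) := by positivity
    nlinarith
  · have e : f x * g x - f y * g y = f x * (g x - g y) + g y * (f x - f y) := by ring
    rw [e]
    refine (abs_add_le _ _).trans ?_
    rw [abs_mul, abs_mul]
    have t1 := mul_le_mul (h1 x) (h2' x y) (abs_nonneg _) (by positivity)
    have t2 := mul_le_mul (h1' y) (h2 x y) (abs_nonneg _) (by positivity)
    have e1 : Real.exp (B * ‖x‖) ≤ Real.exp (B * (‖x‖ + ‖y‖)) := by
      gcongr; linarith [norm_nonneg y]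
    have e2 : Real.exp (B' * ‖y‖) ≤ Real.exp (B' * (‖x‖ + ‖y‖)) := by
      gcongr; linarith [norm_nonneg x]
    have t3 : A * Real.exp (B * ‖x‖) * (A' * Real.exp (B' * (‖x‖ + ‖y‖)) * ‖x - y‖) ≤
        A * Real.exp (B * (‖x‖ + ‖y‖)) * (A' * Real.exp (B' * (‖x‖ + ‖y‖)) * ‖x - y‖) := by
      gcongr
    have t4 : A' * Real.exp (B' * ‖y‖) * (A * Real.exp (B * (‖x‖ + ‖y‖)) * ‖x - y‖) ≤
        A' * Real.exp (B' * (‖x‖ + ‖y‖)) * (A * Real.exp (B * (‖x‖ + ‖y‖)) * ‖x - y‖) := by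
      gcongr
    rw [add_mul, Real.exp_add]
    nlinarith

lemma EL.poly {f : ℝ × ℝ → ℝ} (hf : EL f) (p : Polynomial ℝ) : EL (fun x => p.eval (f x)) := by
  induction p using Polynomial.induction_on with
  | C a => simpa using EL.const a
  | add p q h1 h2 => simpa using h1.add h2
  | monomial n a ih =>
    have := ih.mul hf
    simpa [pow_succ, mul_assoc] using this

lemma EL.h (a b : ℕ) : EL (h a b) := (EL.fst.poly _).mul (EL.snd.poly _)

lemma exp_memLp (B : ℝ) : MemLp (fun x : ℝ × ℝ => Real.exp (B * ‖x‖)) 2 gg := by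
  rw [memLp_two_iff_integrable_sq (by fun_prop)]
  refine (gauss_exp gg (2 * B)).congr (ae_of_all _ fun x => ?_)
  simp only
  rw [← Real.exp_nat_mul]; congr 1; push_cast; ring

lemma EL.memLp {f : ℝ × ℝ → ℝ} (hf : EL f) (hm : AEStronglyMeasurable f gg) : MemLp f 2 gg := by
  obtain ⟨A, B, hA, hB, h1, h2⟩ := hf
  exact ((exp_memLp B).const_mul A).mono' hm (ae_of_all _ h1)

lemma h_cont (a b : ℕ) : Continuous (h a b) := by unfold h; fun_prop

lemma h_memLp (a b : ℕ) : MemLp (h a b) 2 gg := (EL.h a b).memLp (h_cont a b).aestronglyMeasurable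

noncomputable abbrev L2 := Lp ℝ 2 gg

noncomputable def hL (a b : ℕ) : L2 := (h_memLp a b).toLp _

lemma g1_zero : ∫ x, x ∂g1 = 0 := by unfold g1; exact integral_id_gaussianReal

lemma gg_centered (L : StrongDual ℝ (ℝ × ℝ)) : ∫ x, L x ∂gg = 0 := by
  have hi : Integrable (fun x : ℝ => x) g1 := by simpa using poly_int Polynomial.X
  have e : ∀ x : ℝ × ℝ, L x = x.1 * L (1, 0) + x.2 * L (0, 1) := by
    intro x
    conv_lhs => rw [show x = x.1 • ((1, 0) : ℝ × ℝ) + x.2 • ((0, 1) : ℝ × ℝ) by ext <;> simp]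
    rw [map_add, map_smul, map_smul, smul_eq_mul, smul_eq_mul]
  rw [integral_congr_ae (ae_of_all _ e)]
  unfold gg
  rw [integral_add, integral_mul_const, integral_mul_const]
  · rw [integral_fun_fst (fun x : ℝ => x), integral_fun_snd (fun x : ℝ => x), g1_zero]; simp
  · exact (hi.comp_fst g1).mul_const _
  · exact (hi.comp_snd g1).mul_const _

noncomputable def rot (θ : ℝ) : (ℝ × ℝ) × (ℝ × ℝ) → ℝ × ℝ :=
  fun p => Real.cos θ • p.1 + Real.sin θ • p.2

lemma rotation_mp (θ : ℝ) :
    MeasurePreserving (ContinuousLinearMap.rotation θ) (gg.prod gg) (gg.prod gg) :=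
  ⟨by fun_prop, IsGaussian.map_rotation_eq_self_of_forall_strongDual_eq_zero gg_centered θ⟩

lemma rot_mp (θ : ℝ) : MeasurePreserving (rot θ) (gg.prod gg) gg := by
  have := (measurePreserving_fst (μ := gg) (ν := gg)).comp (rotation_mp θ)
  exact this

lemma fst_mp : MeasurePreserving (Prod.fst : (ℝ × ℝ) × (ℝ × ℝ) → ℝ × ℝ) (gg.prod gg) gg :=
  measurePreserving_fst

noncomputable def J : L2 →ₗᵢ[ℝ] Lp ℝ 2 (gg.prod gg) := Lp.compMeasurePreservingₗᵢ ℝ _ fst_mp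
noncomputable def K (θ : ℝ) : L2 →ₗᵢ[ℝ] Lp ℝ 2 (gg.prod gg) :=
  Lp.compMeasurePreservingₗᵢ ℝ _ (rot_mp θ)

noncomputable def B (θ : ℝ) (f g : L2) : ℝ := inner ℝ (J f) (K θ g)

lemma B_eq (θ : ℝ) (f g : L2) : B θ f g = ∫ p, f p.1 * g (rot θ p) ∂(gg.prod gg) := by
  unfold B
  rw [L2.inner_def]
  have h1 : (J f : (ℝ × ℝ) × (ℝ × ℝ) → ℝ) =ᵐ[gg.prod gg] f ∘ Prod.fst :=
    Lp.coeFn_compMeasurePreserving f fst_mp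
  have h2 : (K θ g : (ℝ × ℝ) × (ℝ × ℝ) → ℝ) =ᵐ[gg.prod gg] g ∘ rot θ :=
    Lp.coeFn_compMeasurePreserving g (rot_mp θ)
  refine integral_congr_ae ?_
  filter_upwards [h1, h2] with p h1 h2
  rw [h1, h2]; simp [mul_comm]

lemma B_toLp (θ : ℝ) {f g : ℝ × ℝ → ℝ} (hf : MemLp f 2 gg) (hg : MemLp g 2 gg) :
    B θ (hf.toLp f) (hg.toLp g) = ∫ p, f p.1 * g (rot θ p) ∂(gg.prod gg) := by
  rw [B_eq]
  refine integral_congr_ae ?_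
  filter_upwards [fst_mp.quasiMeasurePreserving.ae_eq_comp hf.coeFn_toLp,
    (rot_mp θ).quasiMeasurePreserving.ae_eq_comp hg.coeFn_toLp] with p h1 h2
  simp only [Function.comp] at h1 h2
  rw [h1, h2]

lemma B_symm (θ : ℝ) (f g : L2) : B θ f g = B (-θ) g f := by
  rw [B_eq, B_eq]
  have hmp := rotation_mp (-θ)
  rw [← hmp.map_eq, integral_map hmp.measurable.aemeasurable]
  · rw [hmp.map_eq]
    congr 1; ext p
    have e1 : (ContinuousLinearMap.rotation (-θ) p).1 = rot (-θ) p := rfl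
    have e2 : rot θ (ContinuousLinearMap.rotation (-θ) p) = p.1 := by
      have := Real.cos_sq_add_sin_sq θ
      simp only [rot, ContinuousLinearMap.rotation_apply, Real.cos_neg, Real.sin_neg]
      ext
      · simp; linear_combination p.1.1 * this
      · simp; linear_combination p.1.2 * this
    rw [e1, e2, mul_comm]
  · rw [hmp.map_eq]
    exact ((Lp.aestronglyMeasurable f).comp_measurePreserving fst_mp).mul
      ((Lp.aestronglyMeasurable g).comp_measurePreserving (rot_mp θ))

lemma h_ou (θ : ℝ) (a b : ℕ) (x : ℝ × ℝ) :
    ∫ z, h a b (Real.cos θ • x + Real.sin θ • z) ∂gg = Real.cos θ ^ (a + b) * h a b x := by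
  unfold gg h
  simp only [Prod.fst_add, Prod.smul_fst, Prod.snd_add, Prod.smul_snd, smul_eq_mul]
  rw [integral_prod_mul (fun z => (H a).eval (Real.cos θ * x.1 + Real.sin θ * z))
    (fun z => (H b).eval (Real.cos θ * x.2 + Real.sin θ * z)),
    hermite_ou _ _ (Real.cos_sq_add_sin_sq θ), hermite_ou _ _ (Real.cos_sq_add_sin_sq θ)]
  ring

lemma B_right (θ : ℝ) (f : L2) (a b : ℕ) :
    B θ f (hL a b) = Real.cos θ ^ (a + b) * inner ℝ f (hL a b) := by
  have hf : f = (Lp.memLp f).toLp f := by simp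
  rw [hf, hL, B_toLp, L2.inner_def, integral_prod]
  · rw [← integral_const_mul]
    refine integral_congr_ae ?_
    filter_upwards [(h_memLp a b).coeFn_toLp, (Lp.memLp f).coeFn_toLp] with x h1 h2
    rw [h1, h2]
    simp only [rot]
    rw [integral_const_mul, h_ou]; simp; ring
  · exact MemLp.integrable_mul (p := 2) (q := 2) ((Lp.memLp f).comp_measurePreserving fst_mp)
      ((h_memLp a b).comp_measurePreserving (rot_mp θ))

lemma B_left (θ : ℝ) (f : L2) (a b : ℕ) :
    B θ (hL a b) f = Real.cos θ ^ (a + b) * inner ℝ f (hL a b) := by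
  rw [B_symm, B_right, Real.cos_neg]

lemma pq_int (f : L2) (p q : Polynomial ℝ) :
    Integrable (fun x : ℝ × ℝ => p.eval x.1 * q.eval x.2 * f x) gg := by
  have : MemLp (fun x : ℝ × ℝ => p.eval x.1 * q.eval x.2) 2 gg :=
    ((EL.fst.poly p).mul (EL.snd.poly q)).memLp (by fun_prop)
  exact MemLp.integrable_mul (p := 2) (q := 2) this (Lp.memLp f)

lemma inner_h (f : L2) (a b : ℕ) :
    inner ℝ f (hL a b) = ∫ x, (H a).eval x.1 * (H b).eval x.2 * f x ∂gg := by
  rw [L2.inner_def, hL]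
  refine integral_congr_ae ?_
  filter_upwards [(h_memLp a b).coeFn_toLp] with x h1
  rw [h1]; simp [h]

lemma pq_zero (f : L2) (hf : ∀ a b, inner ℝ f (hL a b) = 0) (p q : Polynomial ℝ) :
    ∫ x, p.eval x.1 * q.eval x.2 * f x ∂gg = 0 := by
  have hq : q ∈ Submodule.span ℝ (Set.range H) := by rw [H_span]; trivial
  have hp : p ∈ Submodule.span ℝ (Set.range H) := by rw [H_span]; trivial
  induction hp using Submodule.span_induction with
  | mem p hp =>
    obtain ⟨a, rfl⟩ := hp
    induction hq using Submodule.span_induction with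
    | mem q hq =>
      obtain ⟨b, rfl⟩ := hq
      rw [← inner_h, hf]
    | zero => simp
    | add u v _ _ h1 h2 =>
      simp only [Polynomial.eval_add, mul_add, add_mul]
      rw [integral_add (pq_int f _ _) (pq_int f _ _), h1, h2, add_zero]
    | smul c u _ h1 =>
      simp only [Polynomial.eval_smul, smul_eq_mul]
      rw [← mul_zero c, ← h1, ← integral_const_mul]
      congr 1; ext x; ring
  | zero => simp
  | add u v _ _ h1 h2 =>
    simp only [Polynomial.eval_add, add_mul]
    rw [integral_add (pq_int f _ _) (pq_int f _ _), h1, h2, add_zero]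
  | smul c u _ h1 =>
    simp only [Polynomial.eval_smul, smul_eq_mul]
    rw [← mul_zero c, ← h1, ← integral_const_mul]
    congr 1; ext x; ring

lemma lin_zero (f : L2) (hf : ∀ a b, inner ℝ f (hL a b) = 0) (s t : ℝ) (n : ℕ) :
    ∫ x, (s * x.1 + t * x.2) ^ n * f x ∂gg = 0 := by
  have e : ∀ x : ℝ × ℝ, (s * x.1 + t * x.2) ^ n * f x = ∑ m ∈ Finset.range (n + 1),
      (s ^ m * t ^ (n - m) * (n.choose m)) * ((Polynomial.X ^ m : Polynomial ℝ).eval x.1 *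
        (Polynomial.X ^ (n - m) : Polynomial ℝ).eval x.2 * f x) := by
    intro x
    rw [add_pow, Finset.sum_mul]
    refine Finset.sum_congr rfl fun m _ => ?_
    simp; ring
  simp_rw [e]
  rw [integral_finsetSum _ (fun m _ => (pq_int f _ _).const_mul _)]
  refine Finset.sum_eq_zero fun m _ => ?_
  rw [integral_const_mul, pq_zero f hf, mul_zero]

lemma expf_int (f : L2) (B : ℝ) : Integrable (fun x => Real.exp (B * ‖x‖) * |f x|) gg :=
  MemLp.integrable_mul (p := 2) (q := 2) (exp_memLp B) (Lp.memLp f).norm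

lemma char_zero (f : L2) (hf : ∀ a b, inner ℝ f (hL a b) = 0) (L : StrongDual ℝ (ℝ × ℝ)) :
    ∫ x, Complex.exp (L x * Complex.I) * (f x : ℂ) ∂gg = 0 := by
  have e : ∀ x : ℝ × ℝ, L x = L (1, 0) * x.1 + L (0, 1) * x.2 := by
    intro x
    conv_lhs => rw [show x = x.1 • ((1, 0) : ℝ × ℝ) + x.2 • ((0, 1) : ℝ × ℝ) by ext <;> simp]
    rw [map_add, map_smul, map_smul, smul_eq_mul, smul_eq_mul]; ring
  have hm := (Lp.stronglyMeasurable f).measurable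
  have key := hasSum_integral_of_dominated_convergence (μ := gg)
    (F := fun (n : ℕ) (x : ℝ × ℝ) => ((L x * Complex.I) ^ n / (n.factorial : ℂ)) * (f x : ℂ))
    (f := fun x => Complex.exp (L x * Complex.I) * (f x : ℂ))
    (fun n x => |L x| ^ n / n.factorial * |f x|) ?_ ?_ ?_ ?_ ?_
  · refine key.unique ?_
    convert hasSum_zero with n
    have : ∀ x : ℝ × ℝ, ((L x * Complex.I) ^ n / (n.factorial : ℂ)) * (f x : ℂ)
        = (Complex.I ^ n / (n.factorial : ℂ)) * (((L x) ^ n * f x : ℝ) : ℂ) := by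
      intro x; push_cast; ring
    simp_rw [this]
    rw [integral_const_mul, integral_complex_ofReal]
    have h0 := lin_zero f hf (L (1, 0)) (L (0, 1)) n
    rw [integral_congr_ae (ae_of_all _ fun x => by
      simp only [← e x] : (fun x => L x ^ n * f x) =ᵐ[gg] fun x => (L (1, 0) * x.1 + L (0, 1) * x.2) ^ n * f x), h0]
    simp
  · intro n
    exact Measurable.aestronglyMeasurable (by fun_prop)
  · intro n
    refine ae_of_all _ fun x => ?_
    simp
  · refine ae_of_all _ fun x => ?_
    exact (Real.summable_pow_div_factorial _).mul_right _
  · have : ∀ x : ℝ × ℝ, ∑' n : ℕ, |L x| ^ n / n.factorial * |f x| = Real.exp |L x| * |f x| := by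
      intro x
      rw [tsum_mul_right, Real.exp_eq_exp_ℝ, NormedSpace.exp_eq_tsum_div]
    simp_rw [this]
    refine (expf_int f ‖L‖).mono' (Measurable.aestronglyMeasurable (by fun_prop)) (ae_of_all _ fun x => ?_)
    rw [norm_mul, Real.norm_eq_abs, Real.abs_exp, Real.norm_eq_abs, abs_abs]
    gcongr
    exact L.le_opNorm x
  · refine ae_of_all _ fun x => ?_
    refine HasSum.mul_right _ ?_
    rw [Complex.exp_eq_exp_ℂ]
    exact NormedSpace.expSeries_div_hasSum_exp _

lemma dense_h (f : L2) (hf : ∀ a b, inner ℝ f (hL a b) = 0) : f = 0 := by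
  have hm := (Lp.stronglyMeasurable f).measurable
  have hfi : Integrable f gg := (Lp.memLp f).integrable (by norm_num)
  have hfin : ∀ g : ℝ × ℝ → ℝ, Integrable g gg →
      IsFiniteMeasure (gg.withDensity (fun x => ENNReal.ofReal (g x))) := fun g hg =>
    isFiniteMeasure_withDensity_ofReal hg.2
  haveI := hfin f hfi
  haveI := hfin (-f) hfi.neg
  have hmeas : gg.withDensity (fun x => ENNReal.ofReal (f x)) =
      gg.withDensity (fun x => ENNReal.ofReal ((-f : ℝ × ℝ → ℝ) x)) := by
    refine Measure.ext_of_charFunDual ?_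
    ext L
    rw [charFunDual_apply, charFunDual_apply,
      integral_withDensity_eq_integral_toReal_smul (by fun_prop) (by simp),
      integral_withDensity_eq_integral_toReal_smul (by fun_prop) (by simp),
      ← sub_eq_zero, ← integral_sub, ← char_zero f hf L]
    · congr 1; ext x
      rw [← sub_smul, ENNReal.toReal_ofReal', ENNReal.toReal_ofReal']
      have : max (f x) 0 - max ((-f : ℝ × ℝ → ℝ) x) 0 = f x := by
        simp only [Pi.neg_apply]
        rcases le_total (f x) 0 with h | h
        · rw [max_eq_right h, max_eq_left (by linarith)]; ring
        · rw [max_eq_left h, max_eq_right (by linarith)]; ring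
      rw [this, Complex.real_smul, mul_comm]
    · refine hfi.mono (Measurable.aestronglyMeasurable (by fun_prop)) (ae_of_all _ fun x => ?_)
      rw [norm_smul, Complex.norm_exp_ofReal_mul_I, mul_one, ENNReal.toReal_ofReal', Real.norm_eq_abs,
        Real.norm_eq_abs, abs_of_nonneg (le_max_right _ _)]
      exact max_le (le_abs_self _) (abs_nonneg _)
    · refine hfi.mono (Measurable.aestronglyMeasurable (by fun_prop)) (ae_of_all _ fun x => ?_)
      rw [norm_smul, Complex.norm_exp_ofReal_mul_I, mul_one, ENNReal.toReal_ofReal', Real.norm_eq_abs,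
        Real.norm_eq_abs, abs_of_nonneg (le_max_right _ _)]
      exact max_le (neg_le_abs _) (abs_nonneg _)
  rw [withDensity_eq_iff_of_sigmaFinite (by fun_prop) (by fun_prop)] at hmeas
  rw [Lp.eq_zero_iff_ae_eq_zero]
  filter_upwards [hmeas] with x hx
  rcases lt_trichotomy (f x) 0 with h | h | h
  · have h2 : 0 < (-f : ℝ × ℝ → ℝ) x := by simpa using h
    rw [ENNReal.ofReal_of_nonpos h.le, eq_comm, ENNReal.ofReal_eq_zero] at hx
    linarith
  · simpa using h
  · have h2 : (-f : ℝ × ℝ → ℝ) x < 0 := by simpa using h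
    rw [ENNReal.ofReal_of_nonpos h2.le, ENNReal.ofReal_eq_zero] at hx
    linarith

/-! ### Spectral inequality -/

noncomputable def S (k : ℕ) : Submodule ℝ L2 :=
  Submodule.span ℝ ((fun ab : ℕ × ℕ => hL ab.1 ab.2) '' ((Finset.HasAntidiagonal.antidiagonal k : Finset (ℕ × ℕ)) : Set (ℕ × ℕ)))

instance (k : ℕ) : FiniteDimensional ℝ (S k) :=
  FiniteDimensional.span_of_finite ℝ ((Finset.finite_toSet _).image _)

lemma hL_mem {a b k : ℕ} (hk : a + b = k) : hL a b ∈ S k :=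
  Submodule.subset_span ⟨(a, b), by simpa using hk, rfl⟩

lemma BS_right (θ : ℝ) {k : ℕ} {g : L2} (hg : g ∈ S k) (f : L2) :
    B θ f g = Real.cos θ ^ k * inner ℝ f g := by
  induction hg using Submodule.span_induction with
  | mem g hg =>
    obtain ⟨ab, hab, rfl⟩ := hg
    simp at hab
    rw [← hab, B_right]
  | zero => simp [B]
  | add u v _ _ h1 h2 => 
    unfold B at *
    rw [map_add, inner_add_right, inner_add_right, h1, h2]; ring
  | smul c u _ h1 => 
    unfold B at *
    rw [map_smul, inner_smul_right, inner_smul_right, h1]; ring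

lemma BS_left (θ : ℝ) {k : ℕ} {g : L2} (hg : g ∈ S k) (f : L2) :
    B θ g f = Real.cos θ ^ k * inner ℝ f g := by
  rw [B_symm, BS_right _ hg, Real.cos_neg]

lemma S_orth {k l : ℕ} (hkl : k ≠ l) {f g : L2} (hf : f ∈ S k) (hg : g ∈ S l) : inner ℝ f g = 0 := by
  have h1 := BS_right (Real.pi / 3) hg f
  rw [BS_left _ hf, real_inner_comm, Real.cos_pi_div_three] at h1
  by_contra h0
  have h2 := mul_right_cancel₀ h0 h1
  exact hkl (pow_right_injective₀ (by norm_num) (by norm_num) h2)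

lemma S_hilbert : IsHilbertSum ℝ (fun k => S k) (fun k => (S k).subtypeₗᵢ) := by
  refine IsHilbertSum.mkInternal _ (OrthogonalFamily.of_pairwise ?_) ?_
  · intro k l hkl 
    rw [Function.onFun, Submodule.isOrtho_iff_inner_eq]
    intro f hf g hg
    exact S_orth hkl hf hg
  · rw [top_le_iff, Submodule.topologicalClosure_eq_top_iff, eq_bot_iff]
    intro f hf
    rw [Submodule.mem_bot]
    refine dense_h f fun a b => ?_
    rw [Submodule.mem_orthogonal'] at hf
    exact hf _ (Submodule.mem_iSup_of_mem (a + b) (hL_mem rfl))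

lemma spec (θ : ℝ) (h0 : 0 ≤ Real.cos θ) (n : ℕ) (f : L2)
    (hf : ∀ k < n, ∀ g ∈ S k, inner ℝ f g = 0) : B θ f f ≤ Real.cos θ ^ n * inner ℝ f f := by
  obtain ⟨w, hw⟩ : ∃ w : lp (fun k => S k) 2, HasSum (fun k => ((w k : S k) : L2)) f := by
    refine ⟨S_hilbert.linearIsometryEquiv f, ?_⟩
    have := S_hilbert.hasSum_linearIsometryEquiv_symm (S_hilbert.linearIsometryEquiv f)
    simpa using this
  have hin : ∀ g : L2, HasSum (fun k => inner ℝ g ((w k : S k) : L2)) (inner ℝ g f) := fun g =>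
    hw.mapL (innerSL ℝ g)
  have hself : ∀ k, inner ℝ f ((w k : S k) : L2) = inner ℝ ((w k : S k) : L2) ((w k : S k) : L2) := by
    intro k
    rw [real_inner_comm]
    refine (hin (w k)).unique ?_
    exact hasSum_single k fun j hj => S_orth hj.symm (w k).2 (w j).2
  have hB : HasSum (fun k => B θ f ((w k : S k) : L2)) (B θ f f) := 
    (hw.mapL (K θ).toContinuousLinearMap).mapL (innerSL ℝ (J f))
  refine hasSum_le (fun k => ?_) hB ((hin f).mul_left (Real.cos θ ^ n))
  rw [BS_right θ (w k).2]
  rcases lt_or_ge k n with h | h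
  · rw [hf k h _ (w k).2]; simp
  · rw [hself]
    exact mul_le_mul_of_nonneg_right (pow_le_pow_of_le_one h0 (Real.cos_le_one _) h) real_inner_self_nonneg

def Pl (k : ℕ) : Submodule ℝ (ℝ × ℝ → ℝ) :=
  Submodule.span ℝ {f | ∃ a b, a + b = k ∧ f = h a b}

lemma Pl_EL {k : ℕ} {P : ℝ × ℝ → ℝ} (hP : P ∈ Pl k) : EL P := by
  induction hP using Submodule.span_induction with
  | mem f hf => obtain ⟨a, b, -, rfl⟩ := hf; exact EL.h a b
  | zero => exact EL.const 0
  | add u v _ _ h1 h2 => exact h1.add h2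
  | smul c u _ h1 => exact (EL.const c).mul h1

lemma Pl_cont {k : ℕ} {P : ℝ × ℝ → ℝ} (hP : P ∈ Pl k) : Continuous P := by
  induction hP using Submodule.span_induction with
  | mem f hf => obtain ⟨a, b, -, rfl⟩ := hf; exact h_cont a b
  | zero => exact continuous_const
  | add u v _ _ h1 h2 => exact h1.add h2
  | smul c u _ h1 => exact h1.const_smul c

lemma poly_analytic (p : Polynomial ℝ) {f : ℝ × ℝ → ℝ} (hf : AnalyticOnNhd ℝ f Set.univ) :
    AnalyticOnNhd ℝ (fun x => p.eval (f x)) Set.univ := by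
  induction p using Polynomial.induction_on with
  | C a => simpa using analyticOnNhd_const
  | add p q h1 h2 => simpa using! h1.add h2
  | monomial n a ih =>
    have := ih.mul hf
    simpa [pow_succ, mul_assoc] using! this

lemma Pl_analytic {k : ℕ} {P : ℝ × ℝ → ℝ} (hP : P ∈ Pl k) : AnalyticOnNhd ℝ P Set.univ := by
  induction hP using Submodule.span_induction with
  | mem f hf =>
    obtain ⟨a, b, -, rfl⟩ := hf
    exact (poly_analytic _ analyticOnNhd_fst).mul (poly_analytic _ analyticOnNhd_snd)
  | zero => exact analyticOnNhd_const
  | add u v _ _ h1 h2 => exact h1.add h2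
  | smul c u _ h1 => 
    have h2 : AnalyticOnNhd ℝ (fun _ : ℝ × ℝ => c) Set.univ := analyticOnNhd_const
    exact h2.mul h1

lemma Pl_parity {k : ℕ} {P : ℝ × ℝ → ℝ} (hP : P ∈ Pl k) (x : ℝ × ℝ) : P (-x) = (-1) ^ k * P x := by
  induction hP using Submodule.span_induction with
  | mem f hf =>
    obtain ⟨a, b, rfl, rfl⟩ := hf
    simp only [h, Prod.fst_neg, Prod.snd_neg, H_parity]; ring
  | zero => simp
  | add u v _ _ h1 h2 => simp only [Pi.add_apply, h1, h2]; ring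
  | smul c u _ h1 => simp only [Pi.smul_apply, h1, smul_eq_mul]; ring

lemma Pl_memLp {k : ℕ} {P : ℝ × ℝ → ℝ} (hP : P ∈ Pl k) : MemLp P 2 gg :=
  (Pl_EL hP).memLp (Pl_cont hP).aestronglyMeasurable

lemma Pl_S {k : ℕ} {P : ℝ × ℝ → ℝ} (hP : P ∈ Pl k) : ∀ hm : MemLp P 2 gg, hm.toLp P ∈ S k := by
  induction hP using Submodule.span_induction with
  | mem f hf =>
    obtain ⟨a, b, hab, rfl⟩ := hf
    intro hm; exact hL_mem hab
  | zero => intro hm; rw [MemLp.toLp_zero]; exact Submodule.zero_mem _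
  | add u v hu hv h1 h2 =>
    intro hm
    rw [MemLp.toLp_add (Pl_memLp hu) (Pl_memLp hv)]
    exact Submodule.add_mem _ (h1 _) (h2 _)
  | smul c u hu h1 =>
    intro hm
    rw [MemLp.toLp_const_smul c (Pl_memLp hu)]
    exact Submodule.smul_mem _ _ (h1 _)

lemma S_Pl {k : ℕ} {g : L2} (hg : g ∈ S k) : ∃ Q ∈ Pl k, g =ᵐ[gg] Q := by
  induction hg using Submodule.span_induction with
  | mem f hf =>
    obtain ⟨⟨a, b⟩, hab, rfl⟩ := hf
    refine ⟨h a b, Submodule.subset_span ⟨a, b, by simpa using hab, rfl⟩, ?_⟩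
    exact (h_memLp a b).coeFn_toLp
  | zero => exact ⟨0, Submodule.zero_mem _, Lp.coeFn_zero _ _ _⟩
  | add u v hu hv h1 h2 =>
    obtain ⟨Q, hQ, h1⟩ := h1
    obtain ⟨Q', hQ', h2⟩ := h2
    exact ⟨Q + Q', Submodule.add_mem _ hQ hQ', (Lp.coeFn_add u v).trans (h1.add h2)⟩
  | smul c u hu h1 =>
    obtain ⟨Q, hQ, h1⟩ := h1
    exact ⟨c • Q, Submodule.smul_mem _ _ hQ, (Lp.coeFn_smul c u).trans (h1.const_smul c)⟩

instance : g1.IsOpenPosMeasure :=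
  (gaussianReal_absolutelyContinuous' 0 (v := 1 / 2) (by norm_num)).isOpenPosMeasure
instance : gg.IsOpenPosMeasure := by unfold gg; infer_instance

lemma B_small {P : ℝ × ℝ → ℝ} (hP : EL P) (hc : Continuous P) {U V : Set (ℝ × ℝ)} (hU : IsOpen U)
    (hV : IsOpen V) (hd : Disjoint U V)
    (hseg : ∀ x ∈ U, ∀ y ∈ V, ∃ z ∈ segment ℝ x y, P z = 0)
    (hu : MemLp (U.indicator P) 2 gg) (hv : MemLp (V.indicator P) 2 gg) :
    Tendsto (fun θ => B θ (hu.toLp _) (hv.toLp _) / Real.sin θ ^ 2) (𝓝[>] 0) (𝓝 0) := by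
  obtain ⟨A, b, hA, hb, h1, h2⟩ := hP
  simp_rw [B_toLp, ← integral_div]
  have hmem : ∀ᶠ θ in 𝓝[>] (0 : ℝ), θ ∈ Set.Ioo 0 (Real.pi / 2) :=
    Ioo_mem_nhdsGT (by positivity)
  suffices hh : Tendsto (fun θ => ∫ p : (ℝ × ℝ) × (ℝ × ℝ),
      U.indicator P p.1 * V.indicator P (rot θ p) / Real.sin θ ^ 2 ∂(gg.prod gg)) (𝓝[>] 0)
      (𝓝 (∫ p : (ℝ × ℝ) × (ℝ × ℝ), (0 : ℝ) ∂(gg.prod gg))) by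
    rwa [integral_zero] at hh
  refine tendsto_integral_filter_of_dominated_convergence
    (fun p => A ^ 2 * Real.exp ((8 * b + 4) * ‖p‖)) ?_ ?_ ?_ ?_
  · refine Eventually.of_forall fun θ => Measurable.aestronglyMeasurable ?_
    have m1 : Measurable (U.indicator P) := hc.measurable.indicator hU.measurableSet
    have m2 : Measurable (V.indicator P) := hc.measurable.indicator hV.measurableSet
    have m3 : Measurable (rot θ) := (rot_mp θ).measurable
    exact ((m1.comp measurable_fst).mul (m2.comp m3)).div_const _
  · filter_upwards [hmem] with θ hθ
    refine ae_of_all _ fun p => ?_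
    by_cases hx : p.1 ∈ U
    swap
    · rw [Set.indicator_of_notMem hx]; simp; positivity
    by_cases hy : rot θ p ∈ V
    swap
    · rw [Set.indicator_of_notMem hy]; simp; positivity
    rw [Set.indicator_of_mem hx, Set.indicator_of_mem hy]
    obtain ⟨z, hz, hz0⟩ := hseg _ hx _ hy
    have hs : 0 < Real.sin θ := Real.sin_pos_of_pos_of_lt_pi hθ.1 (by linarith [hθ.2, Real.pi_pos])
    have hc0 : 0 < Real.cos θ := Real.cos_pos_of_mem_Ioo ⟨by linarith [hθ.1, Real.pi_pos], hθ.2⟩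
    have hc1 := Real.cos_le_one θ
    have hs1 := Real.sin_le_one θ
    have hsc := Real.sin_sq_add_cos_sq θ
    have hcs : 1 - Real.cos θ ≤ Real.sin θ := by
      by_contra hcon
      push Not at hcon
      nlinarith
    set N := ‖p.1‖ + ‖p.2‖ with hN
    have hN0 : 0 ≤ N := by positivity
    have nx : ‖p.1‖ ≤ N := by linarith [norm_nonneg p.2]
    have ny : ‖rot θ p‖ ≤ N := by
      refine (norm_add_le _ _).trans ?_
      rw [norm_smul, norm_smul, Real.norm_of_nonneg hs.le, Real.norm_of_nonneg hc0.le]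
      nlinarith [norm_nonneg p.1, norm_nonneg p.2]
    have nz : ‖z‖ ≤ N := by
      have := (convex_closedBall (0 : ℝ × ℝ) N).segment_subset
        (by simpa using nx) (by simpa using ny) hz
      simpa using this
    have nxy : ‖p.1 - rot θ p‖ ≤ Real.sin θ * N := by
      have e : p.1 - rot θ p = (1 - Real.cos θ) • p.1 + (-Real.sin θ) • p.2 := by
        simp only [rot]; module
      rw [e]
      refine (norm_add_le _ _).trans ?_
      rw [norm_smul, norm_smul, norm_neg, Real.norm_of_nonneg hs.le,
        Real.norm_of_nonneg (by linarith)]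
      nlinarith [norm_nonneg p.1, norm_nonneg p.2]
    have d1 : ‖p.1 - z‖ ≤ Real.sin θ * N := by
      rw [segment_eq_image_lineMap] at hz
      obtain ⟨t, ht, rfl⟩ := hz
      rw [← dist_eq_norm, dist_left_lineMap, dist_eq_norm, Real.norm_of_nonneg ht.1]
      nlinarith [norm_nonneg (p.1 - rot θ p), ht.2]
    have d2 : ‖rot θ p - z‖ ≤ Real.sin θ * N := by
      rw [segment_eq_image_lineMap] at hz
      obtain ⟨t, ht, rfl⟩ := hz
      rw [← dist_eq_norm, dist_right_lineMap, dist_eq_norm, Real.norm_of_nonneg (by linarith [ht.2])]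
      nlinarith [norm_nonneg (p.1 - rot θ p), ht.1]
    have key : ∀ x : ℝ × ℝ, ‖x‖ ≤ N → ‖x - z‖ ≤ Real.sin θ * N →
        |P x| ≤ A * Real.exp (b * (N + N)) * (Real.sin θ * N) := by
      intro x hx1 hx2
      have := h2 x z
      rw [hz0, sub_zero] at this
      refine this.trans ?_
      gcongr
    have k1 := key _ nx d1
    have k2 := key _ ny d2
    rw [norm_div, norm_mul, Real.norm_eq_abs, Real.norm_eq_abs, Real.norm_of_nonneg (by positivity),
      div_le_iff₀ (by positivity)]
    refine (mul_le_mul k1 k2 (abs_nonneg _) (by positivity)).trans ?_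
    have eN : N ≤ Real.exp N := by linarith [Real.add_one_le_exp N]
    have nN : N ≤ 2 * ‖p‖ := by linarith [norm_fst_le p, norm_snd_le p]
    calc A * Real.exp (b * (N + N)) * (Real.sin θ * N) * (A * Real.exp (b * (N + N)) * (Real.sin θ * N))
        = A ^ 2 * (Real.exp (b * (N + N)) * Real.exp (b * (N + N)) * (N * N)) * Real.sin θ ^ 2 := by ring
      _ ≤ A ^ 2 * (Real.exp (b * (N + N)) * Real.exp (b * (N + N)) * (Real.exp N * Real.exp N)) * Real.sin θ ^ 2 := by
          gcongr
      _ = A ^ 2 * Real.exp ((4 * b + 2) * N) * Real.sin θ ^ 2 := by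
          rw [← Real.exp_add, ← Real.exp_add, ← Real.exp_add]; ring_nf
      _ ≤ _ := by
          gcongr ?_ * Real.exp ?_ * ?_
          nlinarith
  · exact (gauss_exp (gg.prod gg) _).const_mul _
  · refine ae_of_all _ fun p => ?_
    refine tendsto_const_nhds.congr' ?_
    by_cases hx : p.1 ∈ U
    · have hcont : Continuous fun θ => rot θ p := by unfold rot; fun_prop
      have h3 : Tendsto (fun θ => rot θ p) (𝓝[>] 0) (𝓝 p.1) := by
        have := (hcont.tendsto 0).mono_left (nhdsWithin_le_nhds (s := Set.Ioi 0))
        simpa [rot] using this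
      filter_upwards [h3 (hU.mem_nhds hx)] with θ hθ
      have : rot θ p ∉ V := fun hv => Set.disjoint_left.1 hd hθ hv
      rw [Set.indicator_of_notMem this]; simp
    · rw [Set.indicator_of_notMem hx]; simp

lemma B_add_left (θ : ℝ) (f f' g : L2) : B θ (f + f') g = B θ f g + B θ f' g := by
  simp [B, inner_add_left]
lemma B_add_right (θ : ℝ) (f g g' : L2) : B θ f (g + g') = B θ f g + B θ f g' := by
  simp [B, inner_add_right]

lemma B_sum_left {ι : Type*} (s : Finset ι) (θ : ℝ) (w : ι → L2) (a : ι → ℝ) (g : L2) :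
    B θ (∑ i ∈ s, a i • w i) g = ∑ i ∈ s, a i * B θ (w i) g := by
  simp [B, sum_inner, inner_smul_left]
lemma B_sum_right {ι : Type*} (s : Finset ι) (θ : ℝ) (w : ι → L2) (a : ι → ℝ) (g : L2) :
    B θ g (∑ i ∈ s, a i • w i) = ∑ i ∈ s, a i * B θ g (w i) := by
  simp [B, inner_sum, inner_smul_right]

/-- abstract rigidity -/
lemma rigid (l : ℕ) (v : L2) (hv : ∀ k < l, ∀ g ∈ S k, inner ℝ v g = 0)
    (hlim : Tendsto (fun θ => (Real.cos θ ^ l * inner ℝ v v - B θ v v) / Real.sin θ ^ 2) (𝓝[>] 0) (𝓝 0)) :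
    v ∈ S l := by
  obtain ⟨u, hu, q, hq, rfl⟩ := Submodule.exists_add_mem_mem_orthogonal (K := S l) v
  rw [Submodule.mem_orthogonal'] at hq
  have hqu : inner ℝ q u = 0 := hq u hu
  have huq : inner ℝ u q = 0 := by rw [real_inner_comm, hqu]
  have hqk : ∀ k < l + 1, ∀ g ∈ S k, inner ℝ q g = 0 := by
    intro k hk g hg
    rcases Nat.lt_succ_iff_lt_or_eq.1 hk with h | rfl
    · have := hv k h g hg
      rwa [inner_add_left, S_orth h.ne' hu hg, zero_add] at this
    · exact hq g hg
  have hE : ∀ θ, Real.cos θ ^ l * inner ℝ (u + q) (u + q) - B θ (u + q) (u + q)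
      = Real.cos θ ^ l * inner ℝ q q - B θ q q := by
    intro θ
    rw [B_add_left, B_add_right, B_add_right, BS_right θ hu, BS_right θ hu, BS_left θ hu,
      inner_add_left, inner_add_right, inner_add_right, hqu, huq]
    ring
  simp_rw [hE] at hlim
  have hlow : ∀ᶠ θ in 𝓝[>] (0 : ℝ), Real.cos θ ^ l / (1 + Real.cos θ) * inner ℝ q q ≤
      (Real.cos θ ^ l * inner ℝ q q - B θ q q) / Real.sin θ ^ 2 := by
    have hmem : ∀ᶠ θ in 𝓝[>] (0 : ℝ), θ ∈ Set.Ioo 0 (Real.pi / 2) :=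
      Ioo_mem_nhdsGT (by positivity)
    filter_upwards [hmem] with θ hθ
    have hs : 0 < Real.sin θ := Real.sin_pos_of_pos_of_lt_pi hθ.1 (by linarith [hθ.2, Real.pi_pos])
    have hc0 : 0 < Real.cos θ := Real.cos_pos_of_mem_Ioo ⟨by linarith [hθ.1, Real.pi_pos], hθ.2⟩
    have hsp := spec θ hc0.le (l + 1) q hqk
    rw [le_div_iff₀ (by positivity)]
    have hsc : Real.sin θ ^ 2 = (1 + Real.cos θ) * (1 - Real.cos θ) := by
      linarith [Real.sin_sq_add_cos_sq θ]
    rw [hsc]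
    have : Real.cos θ ^ l / (1 + Real.cos θ) * inner ℝ q q * ((1 + Real.cos θ) * (1 - Real.cos θ))
        = Real.cos θ ^ l * inner ℝ q q - Real.cos θ ^ (l + 1) * inner ℝ q q := by
      have : 1 + Real.cos θ ≠ 0 := by positivity
      field_simp; ring
    rw [this]; linarith
  have hlim2 : Tendsto (fun θ => Real.cos θ ^ l / (1 + Real.cos θ) * inner ℝ q q) (𝓝[>] 0)
      (𝓝 (Real.cos 0 ^ l / (1 + Real.cos 0) * inner ℝ q q)) := by
    refine Tendsto.mono_left ?_ nhdsWithin_le_nhds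
    refine Tendsto.mul_const _ (Tendsto.div ?_ ?_ (by norm_num))
    · exact (Real.continuous_cos.tendsto 0).pow l
    · exact (Real.continuous_cos.tendsto 0).const_add 1
  have hle := le_of_tendsto_of_tendsto hlim2 hlim hlow
  simp only [Real.cos_zero, one_pow] at hle
  have : inner ℝ q q ≤ 0 := by linarith
  have hq0 : q = 0 := real_inner_self_nonpos.1 this
  rw [hq0, add_zero]; exact hu

lemma par_orth {l : ℕ} {P : ℝ × ℝ → ℝ} (hP : P ∈ Pl l) {W : Set (ℝ × ℝ)}
    (hW : ∀ x, x ∈ W → -x ∈ W) (hu : MemLp (W.indicator P) 2 gg) {a b : ℕ}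
    (hab : (a + b) % 2 ≠ l % 2) : inner ℝ (hu.toLp _) (hL a b) = 0 := by
  have e0 := B_left 0 (hu.toLp _) a b
  have e1 := B_left Real.pi (hu.toLp _) a b
  rw [hL, B_toLp] at e0 e1
  rw [← hL] at e0 e1
  have hind : ∀ x, W.indicator P (-x) = (-1) ^ l * W.indicator P x := by
    intro x
    by_cases hx : x ∈ W
    · rw [Set.indicator_of_mem hx, Set.indicator_of_mem (hW x hx), Pl_parity hP]
    · have : -x ∉ W := fun h => hx (by simpa using hW _ h)
      rw [Set.indicator_of_notMem hx, Set.indicator_of_notMem this, mul_zero]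
  have r0 : ∀ p, rot 0 p = p.1 := by intro p; simp [rot]
  have r1 : ∀ p, rot Real.pi p = -p.1 := by intro p; simp [rot]
  simp only [r0, r1, hind, Real.cos_zero, Real.cos_pi, one_pow, one_mul] at e0 e1
  have e2 : ∀ p : (ℝ × ℝ) × (ℝ × ℝ), h a b p.1 * ((-1) ^ l * W.indicator P p.1)
      = (-1) ^ l * (h a b p.1 * W.indicator P p.1) := fun p => by ring
  simp only [e2, integral_const_mul, e0] at e1
  rcases Nat.even_or_odd l with h1 | h1 <;> rcases Nat.even_or_odd (a + b) with h2 | h2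
  · exact absurd ((Nat.even_iff.1 h2).trans (Nat.even_iff.1 h1).symm) hab
  · rw [h1.neg_one_pow, h2.neg_one_pow] at e1; linarith
  · rw [h1.neg_one_pow, h2.neg_one_pow] at e1; linarith
  · exact absurd ((Nat.odd_iff.1 h2).trans (Nat.odd_iff.1 h1).symm) hab

def D (l : ℕ) : Finset (ℕ × ℕ) :=
  ((Finset.range l) ×ˢ (Finset.range l)).filter fun x => x.1 + x.2 < l ∧ (x.1 + x.2) % 2 = l % 2

lemma seg_zero {P : ℝ × ℝ → ℝ} {ι : Type*} {W : ι → Set (ℝ × ℝ)}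
    (ho : ∀ i, IsOpen (W i)) (hd : ∀ i j, i ≠ j → Disjoint (W i) (W j))
    (hU : ⋃ i, W i = {x | P x ≠ 0}) {i j : ι} (hij : i ≠ j) :
    ∀ x ∈ W i, ∀ y ∈ W j, ∃ z ∈ segment ℝ x y, P z = 0 := by
  intro x hx y hy
  by_contra hcon
  push Not at hcon
  have hpc : IsPreconnected (segment ℝ x y) := (convex_segment x y).isPreconnected
  have hsub : segment ℝ x y ⊆ W i ∪ ⋃ k ∈ {k | k ≠ i}, W k := by
    intro z hz
    have : z ∈ ⋃ i, W i := by rw [hU]; exact hcon z hz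
    obtain ⟨k, hk⟩ := Set.mem_iUnion.1 this
    by_cases h : k = i
    · left; rwa [← h]
    · right; exact Set.mem_biUnion (show k ∈ {k | k ≠ i} from h) hk
  obtain ⟨z, -, hz1, hz2⟩ := hpc (W i) (⋃ k ∈ {k | k ≠ i}, W k) (ho i)
    (isOpen_biUnion fun k _ => ho k) hsub ⟨x, left_mem_segment ℝ x y, hx⟩
    ⟨y, right_mem_segment ℝ x y, Set.mem_biUnion (show j ∈ {k | k ≠ i} from hij.symm) hy⟩
  obtain ⟨k, hk, hzk⟩ := Set.mem_iUnion₂.1 hz2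
  exact Set.disjoint_left.1 (hd k i hk) hzk hz1

lemma quad_id {ι : Type*} [Fintype ι] (a : ι → ℝ) (M : ι → ι → ℝ) (n : ι → ℝ) (c : ℝ)
    (h1 : ∀ i, ∑ j, M i j = c * n i) (h2 : ∀ j, ∑ i, M i j = c * n j) :
    c * (∑ i, a i ^ 2 * n i) - ∑ i, ∑ j, a i * a j * M i j
      = ∑ i, ∑ j, (1 / 2) * (a i - a j) ^ 2 * M i j := by
  have e : ∀ i j, (1 / 2) * (a i - a j) ^ 2 * M i j
      = (1 / 2) * a i ^ 2 * M i j + (1 / 2) * a j ^ 2 * M i j - a i * a j * M i j := by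
    intro i j; ring
  simp only [e, Finset.sum_sub_distrib, Finset.sum_add_distrib]
  have e1 : ∑ i, ∑ j, (1 / 2) * a i ^ 2 * M i j = (1 / 2) * (c * ∑ i, a i ^ 2 * n i) := by
    simp only [← Finset.mul_sum, h1]
    simp only [Finset.mul_sum]
    exact Finset.sum_congr rfl fun i _ => by ring
  have e2 : ∑ i, ∑ j, (1 / 2) * a j ^ 2 * M i j = (1 / 2) * (c * ∑ i, a i ^ 2 * n i) := by
    rw [Finset.sum_comm]
    simp only [← Finset.mul_sum, h2]
    simp only [Finset.mul_sum]
    exact Finset.sum_congr rfl fun i _ => by ring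
  rw [e1, e2]; ring

lemma exists_coeff {ι κ : Type*} [Fintype ι] [Fintype κ] (i0 : ι) (T : ι → κ → ℝ)
    (hc : Fintype.card κ + 1 < Fintype.card ι) :
    ∃ a : ι → ℝ, a ≠ 0 ∧ a i0 = 0 ∧ ∀ k, ∑ i, a i * T i k = 0 := by
  let F : (ι → ℝ) →ₗ[ℝ] (κ → ℝ) × ℝ :=
    { toFun := fun a => (fun k => ∑ i, a i * T i k, a i0)
      map_add' := by
        intro a b; ext <;> simp [add_mul, Finset.sum_add_distrib]
      map_smul' := by
        intro c a; ext <;> simp [mul_assoc, Finset.mul_sum] }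
  have hk : LinearMap.ker F ≠ ⊥ := LinearMap.ker_ne_bot_of_finrank_lt (by simpa using hc)
  obtain ⟨a, ha, h0⟩ := (Submodule.ne_bot_iff _).1 hk
  have ha' : F a = 0 := ha
  refine ⟨a, h0, congrArg Prod.snd ha', fun k => congrFun (congrArg Prod.fst ha') k⟩

lemma inner_toLp {f g : ℝ × ℝ → ℝ} (hf : MemLp f 2 gg) (hg : MemLp g 2 gg) :
    inner ℝ (hf.toLp f) (hg.toLp g) = ∫ x, f x * g x ∂gg := by
  rw [L2.inner_def]
  refine integral_congr_ae ?_
  filter_upwards [hf.coeFn_toLp, hg.coeFn_toLp] with x h1 h2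
  rw [h1, h2]; simp [mul_comm]

theorem main_bound {l : ℕ} {P : ℝ × ℝ → ℝ} (hP : P ∈ Pl l) {ι : Type*} [Fintype ι]
    {W : ι → Set (ℝ × ℝ)} (ho : ∀ i, IsOpen (W i)) (hne : ∀ i, (W i).Nonempty)
    (hd : ∀ i j, i ≠ j → Disjoint (W i) (W j)) (hneg : ∀ i x, x ∈ W i → -x ∈ W i)
    (hU : ⋃ i, W i = {x | P x ≠ 0}) : Fintype.card ι ≤ (D l).card + 1 := by
  classical
  by_contra hcon
  push Not at hcon
  have hι : Nonempty ι := Fintype.card_pos_iff.1 (by omega)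
  obtain ⟨i0⟩ := hι
  have hm : ∀ i, MemLp ((W i).indicator P) 2 gg := fun i =>
    (Pl_memLp hP).indicator (ho i).measurableSet
  set w : ι → L2 := fun i => (hm i).toLp _ with hw
  have hsumP : ∀ x, ∑ i, (W i).indicator P x = P x := by
    intro x
    by_cases hx : P x = 0
    · rw [hx]
      refine Finset.sum_eq_zero fun i _ => ?_
      by_cases hxi : x ∈ W i
      · rw [Set.indicator_of_mem hxi, hx]
      · rw [Set.indicator_of_notMem hxi]
    · have : x ∈ ⋃ i, W i := by rw [hU]; exact hx
      obtain ⟨k, hk⟩ := Set.mem_iUnion.1 this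
      rw [Finset.sum_eq_single k]
      · rw [Set.indicator_of_mem hk]
      · intro j _ hj
        exact Set.indicator_of_notMem (fun h => Set.disjoint_left.1 (hd j k hj) h hk) _
      · simp
  have hae : ∀ a : ι → ℝ, (∑ i, a i • w i : L2) =ᵐ[gg] fun x => ∑ i, a i * (W i).indicator P x := by
    intro a
    have h1 : ∀ᵐ x ∂gg, ∀ i, w i x = (W i).indicator P x :=
      ae_all_iff.2 fun i => (hm i).coeFn_toLp
    have h2 : ∀ᵐ x ∂gg, ∀ i, (a i • w i : L2) x = a i * w i x :=
      ae_all_iff.2 fun i => Lp.coeFn_smul (a i) (w i)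
    filter_upwards [h1, h2, Lp.coeFn_finsetSum Finset.univ (fun i => a i • w i)] with x h1 h2 h3
    rw [h3]
    simp [h1, h2]
  have hPw : (Pl_memLp hP).toLp P = ∑ i, w i := by
    refine Lp.ext ?_
    have := hae (fun _ => 1)
    simp only [one_smul, one_mul, hsumP] at this
    exact (Pl_memLp hP).coeFn_toLp.trans this.symm
  have hPS : (∑ i, w i) ∈ S l := hPw ▸ Pl_S hP _
  have horth : ∀ i j, i ≠ j → inner ℝ (w i) (w j) = 0 := by
    intro i j hij
    simp only [hw]
    rw [inner_toLp]
    refine integral_eq_zero_of_ae (ae_of_all _ fun x => ?_)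
    show (W i).indicator P x * (W j).indicator P x = 0
    by_cases hx : x ∈ W i
    · rw [Set.indicator_of_notMem (fun h => Set.disjoint_left.1 (hd i j hij) hx h) (f := P)]; simp
    · rw [Set.indicator_of_notMem hx]; simp
  have hself : ∀ i, inner ℝ (w i) (∑ j, w j) = inner ℝ (w i) (w i) := by
    intro i
    rw [inner_sum, Finset.sum_eq_single i (fun j _ hj => horth i j hj.symm) (by simp)]
  obtain ⟨a, ha0, hai0, haT⟩ := exists_coeff i0 (fun i (x : D l) => inner ℝ (w i) (hL x.1.1 x.1.2))
    (by simpa using hcon)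
  set v : L2 := ∑ i, a i • w i with hv
  have hvh : ∀ x y, x + y < l → inner ℝ v (hL x y) = 0 := by
    intro x y hxy
    rw [hv, sum_inner]
    simp only [inner_smul_left, conj_trivial]
    by_cases hpar : (x + y) % 2 = l % 2
    · exact haT ⟨(x, y), by simp [D]; omega⟩
    · exact Finset.sum_eq_zero fun i _ => by rw [par_orth hP (hneg i) (hm i) hpar, mul_zero]
  have hvS : ∀ k < l, ∀ g ∈ S k, inner ℝ v g = 0 := by
    intro k hk g hg
    induction hg using Submodule.span_induction with
    | mem f hf =>
      obtain ⟨⟨x, y⟩, hab, rfl⟩ := hf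
      exact hvh x y (by
        have : x + y = k := by simpa using hab
        omega)
    | zero => simp
    | add u v _ _ h1 h2 => rw [inner_add_right, h1, h2, add_zero]
    | smul c u _ h1 => rw [inner_smul_right, h1, mul_zero]
  have hvv : inner ℝ v v = ∑ i, a i ^ 2 * inner ℝ (w i) (w i) := by
    rw [hv, sum_inner]
    refine Finset.sum_congr rfl fun i _ => ?_
    rw [inner_sum, Finset.sum_eq_single i]
    · rw [real_inner_smul_left, real_inner_smul_right]; ring
    · intro j _ hj
      simp [inner_smul_left, inner_smul_right, horth i j hj.symm]
    · simp
  have hid : ∀ θ, Real.cos θ ^ l * inner ℝ v v - B θ v v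
      = ∑ i, ∑ j, (1 / 2) * (a i - a j) ^ 2 * B θ (w i) (w j) := by
    intro θ
    have hB : B θ v v = ∑ i, ∑ j, a i * a j * B θ (w i) (w j) := by
      rw [hv, B_sum_left]
      refine Finset.sum_congr rfl fun i _ => ?_
      rw [B_sum_right, Finset.mul_sum]
      exact Finset.sum_congr rfl fun j _ => by ring
    rw [hvv, hB]
    refine quad_id a (fun i j => B θ (w i) (w j)) _ _ ?_ ?_
    · intro i
      have := B_sum_right Finset.univ θ w (fun _ => 1) (w i)
      simp only [one_smul, one_mul] at this
      rw [← this, BS_right θ hPS, hself]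
    · intro i
      have := B_sum_left Finset.univ θ w (fun _ => 1) (w i)
      simp only [one_smul, one_mul] at this
      rw [← this, BS_left θ hPS, hself]
  have hlim : Tendsto (fun θ => (Real.cos θ ^ l * inner ℝ v v - B θ v v) / Real.sin θ ^ 2)
      (𝓝[>] 0) (𝓝 0) := by
    simp_rw [hid, Finset.sum_div]
    rw [show (0 : ℝ) = ∑ i : ι, ∑ j : ι, (0 : ℝ) by simp]
    rw [show 𝓝[>] (∑ i : ι, ∑ j : ι, (0 : ℝ)) = 𝓝[>] 0 by simp]
    refine tendsto_finsetSum _ fun i _ => tendsto_finsetSum _ fun j _ => ?_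
    by_cases hij : i = j
    · subst hij; simp
    · have := (B_small (Pl_EL hP) (Pl_cont hP) (ho i) (ho j) (hd i j hij)
        (seg_zero ho hd hU hij) (hm i) (hm j)).const_mul ((1 / 2) * (a i - a j) ^ 2)
      rw [mul_zero] at this
      refine this.congr fun θ => ?_
      rw [mul_div_assoc]
  have hvl : v ∈ S l := rigid l v hvS hlim
  obtain ⟨Q, hQ, hvQ⟩ := S_Pl hvl
  have hfin : ∀ᵐ x ∂gg, Q x = ∑ i, a i * (W i).indicator P x := by
    filter_upwards [hvQ, hae a] with x h1 h2
    rw [← h1, ← h2]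
  have hon : ∀ i, ∀ x ∈ W i, Q x = a i * P x := by
    intro i
    have hcont : Continuous fun x => Q x - a i * P x := by
      have := Pl_cont hQ
      have := Pl_cont hP
      fun_prop
    have hz : ∀ᵐ x ∂(gg.restrict (W i)), Q x = a i * P x := by
      rw [ae_restrict_iff' (ho i).measurableSet]
      filter_upwards [hfin] with x hx hxi
      rw [hx, Finset.sum_eq_single i]
      · rw [Set.indicator_of_mem hxi]
      · intro j _ hj
        rw [Set.indicator_of_notMem (fun h => Set.disjoint_left.1 (hd j i hj) h hxi), mul_zero]
      · simp
    exact Measure.eqOn_open_of_ae_eq hz (ho i) (Pl_cont hQ).continuousOn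
      ((Pl_cont hP).const_smul (a i)).continuousOn
  have hQ0 : ∀ x, Q x = 0 := by
    obtain ⟨x0, hx0⟩ := hne i0
    have hev : Q =ᶠ[𝓝 x0] 0 := by
      filter_upwards [(ho i0).mem_nhds hx0] with x hx
      rw [hon i0 x hx, hai0, zero_mul]; rfl
    have := (Pl_analytic hQ).eqOn_zero_of_preconnected_of_eventuallyEq_zero isPreconnected_univ
      (Set.mem_univ x0) hev
    exact fun x => this (Set.mem_univ x)
  apply ha0
  funext i
  obtain ⟨x, hx⟩ := hne i
  have hPx : P x ≠ 0 := by
    have : x ∈ ⋃ i, W i := Set.mem_iUnion.2 ⟨i, hx⟩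
    rw [hU] at this; exact this
  have := hon i x hx
  rw [hQ0 x] at this
  exact (mul_eq_zero.1 this.symm).resolve_right hPx

lemma D_card (l : ℕ) : 4 * (D l).card ≤ l ^ 2 := by
  induction l using Nat.twoStepInduction with
  | zero => simp [D]
  | one =>
    have : D 1 = ∅ := by decide
    simp [this]
  | more l ih _ =>
    have hsub : D (l + 2) ⊆ D l ∪ Finset.HasAntidiagonal.antidiagonal l := by
      rintro ⟨x, y⟩ hxy
      simp only [D, Finset.mem_filter, Finset.mem_product, Finset.mem_range, Finset.mem_union,
        Finset.HasAntidiagonal.mem_antidiagonal] at hxy ⊢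
      omega
    have h1 := (Finset.card_le_card hsub).trans (Finset.card_union_le _ _)
    rw [Finset.Nat.card_antidiagonal] at h1
    nlinarith

def comps (U : Set (ℝ × ℝ)) : Set (Set (ℝ × ℝ)) := {C | ∃ p ∈ U, C = connectedComponentIn U p}

lemma comps_neg {U : Set (ℝ × ℝ)} (hU : -U = U) {C : Set (ℝ × ℝ)} (hC : C ∈ comps U) :
    -C ∈ comps U := by
  obtain ⟨p, hp, rfl⟩ := hC
  have hp' : -p ∈ U := by rw [← hU]; simpa using hp
  refine ⟨-p, hp', ?_⟩
  have := (Homeomorph.neg (ℝ × ℝ)).image_connectedComponentIn hp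
  have e : ∀ s : Set (ℝ × ℝ), (Homeomorph.neg (ℝ × ℝ)) '' s = -s := by
    intro s; simp
  rw [e, e, hU] at this
  exact this

lemma comps_eq {U : Set (ℝ × ℝ)} {C C' : Set (ℝ × ℝ)} (hC : C ∈ comps U) (hC' : C' ∈ comps U)
    {x : ℝ × ℝ} (h1 : x ∈ C) (h2 : x ∈ C') : C = C' := by
  obtain ⟨p, hp, rfl⟩ := hC
  obtain ⟨q, hq, rfl⟩ := hC'
  rw [connectedComponentIn_eq h1, connectedComponentIn_eq h2]

lemma comps_nonempty {U : Set (ℝ × ℝ)} {C : Set (ℝ × ℝ)} (hC : C ∈ comps U) : C.Nonempty := by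
  obtain ⟨p, hp, rfl⟩ := hC
  exact ⟨p, mem_connectedComponentIn hp⟩

lemma comps_sub {U : Set (ℝ × ℝ)} {C : Set (ℝ × ℝ)} (hC : C ∈ comps U) : C ⊆ U := by
  obtain ⟨p, hp, rfl⟩ := hC
  exact connectedComponentIn_subset _ _

lemma comps_bound {l : ℕ} {P : ℝ × ℝ → ℝ} (hP : P ∈ Pl l) :
    (comps {x | P x ≠ 0}).ncard ≤ 2 * ((D l).card + 1) := by
  classical
  set U := {x | P x ≠ 0} with hUdef
  have hUo : IsOpen U := isOpen_ne.preimage (Pl_cont hP)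
  have hUn : -U = U := by
    ext x
    simp only [Set.mem_neg, hUdef, Set.mem_ofPred_eq, Pl_parity hP]
    simp
  by_cases hf : (comps U).Finite
  swap
  · rw [Set.Infinite.ncard hf]; omega
  set F := hf.toFinset with hF
  have memF : ∀ C, C ∈ F ↔ C ∈ comps U := fun C => hf.mem_toFinset
  let sy : Set (ℝ × ℝ) → Set (ℝ × ℝ) := fun C => C ∪ -C
  have meet : ∀ C ∈ comps U, ∀ C' ∈ comps U, ∀ x, x ∈ sy C → x ∈ sy C' → C = C' ∨ C = -C' := by
    intro C hC C' hC' x h1 h2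
    rcases h1 with h1 | h1 <;> rcases h2 with h2 | h2
    · exact Or.inl (comps_eq hC hC' h1 h2)
    · exact Or.inr (comps_eq hC (comps_neg hUn hC') h1 h2)
    · right
      have := comps_eq (comps_neg hUn hC) hC' h1 h2
      rw [← this, neg_neg]
    · left
      have := comps_eq (comps_neg hUn hC) (comps_neg hUn hC') h1 h2
      exact neg_injective this
  have hcardS : (F.image sy).card ≤ (D l).card + 1 := by
    have := main_bound hP (ι := ↥(F.image sy)) (W := fun s => s.1) ?_ ?_ ?_ ?_ ?_
    · simpa using this
    · rintro ⟨s, hs⟩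
      obtain ⟨C, hC, rfl⟩ := Finset.mem_image.1 hs
      obtain ⟨p, hp, rfl⟩ := (memF C).1 hC
      exact hUo.connectedComponentIn.union hUo.connectedComponentIn.neg
    · rintro ⟨s, hs⟩
      obtain ⟨C, hC, rfl⟩ := Finset.mem_image.1 hs
      exact (comps_nonempty ((memF C).1 hC)).inl
    · rintro ⟨s, hs⟩ ⟨t, ht⟩ hst
      obtain ⟨C, hC, rfl⟩ := Finset.mem_image.1 hs
      obtain ⟨C', hC', rfl⟩ := Finset.mem_image.1 ht
      rw [Set.disjoint_left]
      intro x h1 h2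
      apply hst
      rcases meet C ((memF C).1 hC) C' ((memF C').1 hC') x h1 h2 with rfl | rfl
      · rfl
      · apply Subtype.ext
        simp only [sy, neg_neg, Set.union_comm]
    · rintro ⟨s, hs⟩ x hx
      obtain ⟨C, hC, rfl⟩ := Finset.mem_image.1 hs
      rcases hx with hx | hx
      · right; simpa using hx
      · left; simpa using hx
    · ext x
      simp only [Set.mem_iUnion]
      constructor
      · rintro ⟨⟨s, hs⟩, hx⟩
        obtain ⟨C, hC, rfl⟩ := Finset.mem_image.1 hs
        rcases hx with hx | hx
        · exact comps_sub ((memF C).1 hC) hx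
        · exact comps_sub (comps_neg hUn ((memF C).1 hC)) hx
      · intro hx
        refine ⟨⟨sy (connectedComponentIn U x), Finset.mem_image.2 ⟨_, (memF _).2 ⟨x, hx, rfl⟩, rfl⟩⟩, ?_⟩
        exact Or.inl (mem_connectedComponentIn hx)
  have hfib : F.card ≤ 2 * (F.image sy).card := by
    refine Finset.card_le_mul_card_image F 2 ?_
    intro s hs
    obtain ⟨C, hC, rfl⟩ := Finset.mem_image.1 hs
    refine (Finset.card_le_card (t := {C, -C}) ?_).trans Finset.card_le_two
    intro C' hC'
    obtain ⟨h1, h2⟩ := Finset.mem_filter.1 hC'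
    obtain ⟨x, hx⟩ := comps_nonempty ((memF C').1 h1)
    have hx1 : x ∈ sy C' := Or.inl hx
    rcases meet C' ((memF C').1 h1) C ((memF C).1 hC) x hx1 (h2 ▸ hx1) with h | h <;> simp [h]
  rw [Set.ncard_eq_toFinset_card _ hf, ← hF]
  omega

lemma eig_Pl {l : ℕ} {u : ℝ × ℝ → ℝ} (hu : u ∈ eigenspace l) :
    ∃ P ∈ Pl l, ∀ x, u x = P x * Real.exp (-(x.1 ^ 2 + x.2 ^ 2) / 2) := by
  induction hu using Submodule.span_induction with
  | mem f hf =>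
    obtain ⟨j, hj, rfl⟩ := hf
    exact ⟨h (l - j) j, Submodule.subset_span ⟨l - j, j, by omega, rfl⟩, fun x => rfl⟩
  | zero => exact ⟨0, Submodule.zero_mem _, fun x => by simp⟩
  | add u v hu hv h1 h2 =>
    obtain ⟨Q, hQ, h1⟩ := h1
    obtain ⟨Q', hQ', h2⟩ := h2
    exact ⟨Q + Q', Submodule.add_mem _ hQ hQ', fun x => by simp [h1, h2, add_mul]⟩
  | smul c u hu h1 =>
    obtain ⟨Q, hQ, h1⟩ := h1
    exact ⟨c • Q, Submodule.smul_mem _ _ hQ, fun x => by simp [h1, mul_assoc]⟩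

lemma part_a {l : ℕ} (hl : 3 ≤ l) {u : ℝ × ℝ → ℝ} (hu : u ∈ eigenspace l) :
    mu u < l * (l + 1) / 2 + 1 := by
  obtain ⟨P, hP, hx⟩ := eig_Pl hu
  have hset : {q : ℝ × ℝ | u q ≠ 0} = {q | P q ≠ 0} := by
    ext q; simp [hx, Real.exp_ne_zero]
  have hmu : mu u = (comps {x | P x ≠ 0}).ncard := by
    rw [← hset]; rfl
  have h1 := comps_bound hP
  have h2 := D_card l
  rw [hmu]
  rcases hl.eq_or_lt with rfl | hl
  · omega
  · have : 4 * (D l).card + 4 ≤ l * (l + 1) := by nlinarith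
    omega

lemma mu_eq_card {ι : Type*} [Fintype ι] {u : ℝ × ℝ → ℝ} {W : ι → Set (ℝ × ℝ)}
    (ho : ∀ i, IsOpen (W i)) (hc : ∀ i, Convex ℝ (W i)) (hne : ∀ i, (W i).Nonempty)
    (hd : ∀ i j, i ≠ j → Disjoint (W i) (W j)) (hU : ∀ x, u x ≠ 0 ↔ ∃ i, x ∈ W i) :
    mu u = Fintype.card ι := by
  have hcc : ∀ i, ∀ p ∈ W i, connectedComponentIn {q | u q ≠ 0} p = W i := by
    intro i p hp
    have hpU : p ∈ {q | u q ≠ 0} := (hU p).2 ⟨i, hp⟩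
    apply Set.Subset.antisymm
    · refine isPreconnected_connectedComponentIn.subset_left_of_subset_union (ho i)
        (v := ⋃ k ∈ {k | k ≠ i}, W k) (isOpen_biUnion fun k _ => ho k) ?_ ?_
        ⟨p, mem_connectedComponentIn hpU, hp⟩
      · rw [Set.disjoint_iUnion₂_right]
        exact fun k hk => hd i k (Ne.symm hk)
      · intro z hz
        obtain ⟨k, hk⟩ := (hU z).1 (connectedComponentIn_subset _ _ hz)
        by_cases h : k = i
        · left; rwa [← h]
        · right; exact Set.mem_biUnion (show k ∈ {k | k ≠ i} from h) hk
    · exact (hc i).isPreconnected.subset_connectedComponentIn hp fun z hz => (hU z).2 ⟨i, hz⟩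
  have hset : {C : Set (ℝ × ℝ) | ∃ p : ℝ × ℝ, u p ≠ 0 ∧
      C = connectedComponentIn {q : ℝ × ℝ | u q ≠ 0} p} = Set.range W := by
    ext C
    constructor
    · rintro ⟨p, hp, rfl⟩
      obtain ⟨i, hi⟩ := (hU p).1 hp
      exact ⟨i, (hcc i p hi).symm⟩
    · rintro ⟨i, rfl⟩
      obtain ⟨p, hp⟩ := hne i
      exact ⟨p, (hU p).2 ⟨i, hp⟩, (hcc i p hp).symm⟩
  have hinj : Function.Injective W := by
    intro i j hij
    by_contra hne'
    obtain ⟨p, hp⟩ := hne i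
    exact Set.disjoint_left.1 (hd i j hne') hp (hij ▸ hp)
  rw [mu, hset, ← Set.image_univ, Set.ncard_image_of_injective _ hinj, Set.ncard_univ,
    Nat.card_eq_fintype_card]

noncomputable def sg (s : Bool) : ℝ := if s then 1 else -1

lemma sg_iff (x : ℝ) : x ≠ 0 ↔ ∃ s, 0 < sg s * x := by
  simp only [Bool.exists_bool, sg]
  constructor
  · intro h
    rcases lt_or_gt_of_ne h with h | h
    · left; simpa using h
    · right; simpa using h
  · rintro (h | h) rfl <;> simp at h

lemma sg_inj {s t : Bool} {x : ℝ} (h1 : 0 < sg s * x) (h2 : 0 < sg t * x) : s = t := by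
  cases s <;> cases t <;> simp [sg] at h1 h2 ⊢ <;> linarith

lemma sg_sq (s : Bool) : 0 < sg s * sg s := by cases s <;> simp [sg]

lemma part_b0 : mu (phi 0 0) = 1 := by
  rw [mu_eq_card (ι := Unit) (W := fun _ => Set.univ) (fun _ => isOpen_univ) (fun _ => convex_univ)
    (fun _ => Set.univ_nonempty) (fun i j hij => absurd (Subsingleton.elim i j) hij)]
  · simp
  · intro x; simp [phi, H, Real.exp_ne_zero]

lemma part_b1 : mu (phi 1 0) = 2 := by
  rw [mu_eq_card (ι := Bool) (W := fun s => {p | 0 < sg s * p.1})]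
  · simp
  · intro s; exact isOpen_lt continuous_const (by fun_prop)
  · intro s x hx y hy a b ha hb hab
    simp only [Set.mem_ofPred_eq, Prod.fst_add, Prod.smul_fst, smul_eq_mul] at *
    have : sg s * (a * x.1 + b * y.1) = a * (sg s * x.1) + b * (sg s * y.1) := by ring
    rw [this]
    rcases ha.eq_or_lt with rfl | ha
    · have : b = 1 := by linarith
      simp [this, hy]
    · positivity
  · intro s; exact ⟨(sg s, 0), sg_sq s⟩
  · intro s t hst
    exact Set.disjoint_left.2 fun x h1 h2 => hst (sg_inj h1 h2)
  · intro x
    simp only [Set.mem_ofPred_eq, ← sg_iff]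
    simp [phi, H, Real.exp_ne_zero]

lemma part_b2 : mu (phi 1 1) = 4 := by
  rw [mu_eq_card (ι := Bool × Bool) (W := fun s => {p | 0 < sg s.1 * p.1 ∧ 0 < sg s.2 * p.2})]
  · simp
  · intro s
    have c1 : Continuous fun p : ℝ × ℝ => sg s.1 * p.1 := by fun_prop
    have c2 : Continuous fun p : ℝ × ℝ => sg s.2 * p.2 := by fun_prop
    exact (isOpen_lt continuous_const c1).inter (isOpen_lt continuous_const c2)
  · intro s x hx y hy a b ha hb hab
    simp only [Set.mem_ofPred_eq, Prod.fst_add, Prod.smul_fst, Prod.snd_add, Prod.smul_snd,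
      smul_eq_mul] at *
    have e1 : sg s.1 * (a * x.1 + b * y.1) = a * (sg s.1 * x.1) + b * (sg s.1 * y.1) := by ring
    have e2 : sg s.2 * (a * x.2 + b * y.2) = a * (sg s.2 * x.2) + b * (sg s.2 * y.2) := by ring
    rw [e1, e2]
    obtain ⟨hx1, hx2⟩ := hx
    obtain ⟨hy1, hy2⟩ := hy
    rcases ha.eq_or_lt with rfl | ha
    · have : b = 1 := by linarith
      simp [this, hy1, hy2]
    · constructor <;> positivity
  · intro s; exact ⟨(sg s.1, sg s.2), sg_sq s.1, sg_sq s.2⟩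
  · intro s t hst
    exact Set.disjoint_left.2 fun x h1 h2 => hst (Prod.ext (sg_inj h1.1 h2.1) (sg_inj h1.2 h2.2))
  · intro x
    have : (∃ i : Bool × Bool, x ∈ {p : ℝ × ℝ | 0 < sg i.1 * p.1 ∧ 0 < sg i.2 * p.2})
        ↔ x.1 ≠ 0 ∧ x.2 ≠ 0 := by
      rw [sg_iff, sg_iff]
      constructor
      · rintro ⟨i, h1, h2⟩; exact ⟨⟨_, h1⟩, ⟨_, h2⟩⟩
      · rintro ⟨⟨s, h1⟩, ⟨t, h2⟩⟩; exact ⟨(s, t), h1, h2⟩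
    rw [this]
    simp [phi, H, Real.exp_ne_zero]

lemma part_b (l : ℕ) (hl : l ≤ 2) : ∃ u : ℝ × ℝ → ℝ, u ∈ eigenspace l ∧ u ≠ 0 ∧
    mu u = l * (l + 1) / 2 + 1 := by
  have hz : ∀ m n, 0 < (H m).eval 1 → 0 < (H n).eval 1 → phi m n ≠ 0 := by
    intro m n h1 h2 h0
    have h3 := congrFun h0 (1, 1)
    have : 0 < phi m n (1, 1) := by unfold phi; positivity
    rw [h3] at this
    exact lt_irrefl _ this
  interval_cases l
  · exact ⟨phi 0 0, Submodule.subset_span ⟨0, by norm_num, rfl⟩, hz _ _ (by simp [H]) (by simp [H]),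
      part_b0⟩
  · exact ⟨phi 1 0, Submodule.subset_span ⟨0, by norm_num, rfl⟩, hz _ _ (by simp [H]) (by simp [H]),
      part_b1⟩
  · exact ⟨phi 1 1, Submodule.subset_span ⟨1, by norm_num, rfl⟩, hz _ _ (by simp [H]) (by simp [H]),
      part_b2⟩

end CS

/-- **Corollary 6.2.** The only Courant sharp eigenvalues of the 2D isotropic quantum
harmonic oscillator are `2`, `4` and `6`: for `ℓ ≥ 3` every nonzero `u ∈ E_ℓ` has
strictly fewer than `ℓ(ℓ+1)/2 + 1` nodal domains, while for `ℓ ∈ {0,1,2}` some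
nonzero `u ∈ E_ℓ` attains the Courant bound `ℓ(ℓ+1)/2 + 1`. -/
theorem courant_sharp_iff :
    (∀ ℓ : ℕ, 3 ≤ ℓ → ∀ u : ℝ × ℝ → ℝ, u ∈ eigenspace ℓ → u ≠ 0 →
      mu u < ℓ * (ℓ + 1) / 2 + 1) ∧
    (∀ ℓ : ℕ, ℓ ≤ 2 → ∃ u : ℝ × ℝ → ℝ, u ∈ eigenspace ℓ ∧ u ≠ 0 ∧
      mu u = ℓ * (ℓ + 1) / 2 + 1) := by
  exact ⟨fun ℓ hl u hu _ => CS.part_a hl hu, CS.part_b⟩
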